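/- The quotient group Λ7♯/Λ7 has exactly 256 elements, consisting of: the zero coset; exactly 56 cosets of minimal norm 3/4, each of order 4; exactly 63 cosets of minimal norm 1, each of order 2; exactly 72 cosets of minimal norm 7/4, each of order 4; exactly 63 cosets of minimal norm 2, each of order 2; and exactly 1 coset of minimal norm 3, of order 2. Here the minimal norm of a coset is the minimum of ‖x‖² over x in the coset. -/

import Mathlib

noncomputable section

open scoped RealInnerProductSpace

/-- `ℝ^n` with the standard inner product. -/
abbrev E (n : ℕ) := EuclideanSpace ℝ (Fin n)

/-- The standard basis vector `ε i`. -/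
def εv {n : ℕ} (i : Fin n) : E n := EuclideanSpace.single i 1

/-- The vector of `ℝ^n` with the given coordinates. -/
def vec {n : ℕ} (x : Fin n → ℝ) : E n := (WithLp.equiv 2 (Fin n → ℝ)).symm x

/-- The vector of `ℝ^n` with the given integer coordinates. -/
def intVec {n : ℕ} (x : Fin n → ℤ) : E n := (WithLp.equiv 2 (Fin n → ℝ)).symm fun i => (x i : ℝ)

/-- A lattice is integral if all pairwise inner products of its elements are integers. -/
def LatticeIsIntegral {n : ℕ} (L : Submodule ℤ (E n)) : Prop :=
  ∀ x ∈ L, ∀ y ∈ L, ∃ k : ℤ, ⟪x, y⟫ = (k : ℝ)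

/-- Two lattices are isometric if a linear isometry of the ambient space carries
one onto the other. -/
def IsometricLattices {n : ℕ} (L M : Submodule ℤ (E n)) : Prop :=
  ∃ g : E n ≃ₗᵢ[ℝ] E n, g '' (L : Set (E n)) = (M : Set (E n))

/-- The dual lattice `Λ♯ = {x : ⟪x,y⟫ ∈ ℤ for all y ∈ Λ}`. -/
def dualLattice {n : ℕ} (Λ : Submodule ℤ (E n)) : Submodule ℤ (E n) where
  carrier := {x | ∀ y ∈ Λ, ∃ k : ℤ, ⟪x, y⟫ = (k : ℝ)}
  zero_mem' := fun y _ => ⟨0, by simp⟩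
  add_mem' := by
    intro a b ha hb y hy
    obtain ⟨k, hk⟩ := ha y hy
    obtain ⟨l, hl⟩ := hb y hy
    exact ⟨k + l, by rw [inner_add_left, hk, hl]; push_cast; ring⟩
  smul_mem' := by
    intro c x hx y hy
    obtain ⟨k, hk⟩ := hx y hy
    refine ⟨c * k, ?_⟩
    rw [← Int.cast_smul_eq_zsmul ℝ c x, real_inner_smul_left, hk]
    push_cast
    ring

/-- The quotient abelian group `Λ♯/Λ`. -/
abbrev DualQuot {n : ℕ} (Λ : Submodule ℤ (E n)) :=
  (dualLattice Λ) ⧸ (Λ.comap (dualLattice Λ).subtype)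

/-- The coset `c ∈ Λ♯/Λ` has minimal norm `m`, i.e. `m` is the minimum of `‖x‖²`
over `x` in the coset `c`. -/
def CosetMinNorm {n : ℕ} (Λ : Submodule ℤ (E n)) (c : DualQuot Λ) (m : ℝ) : Prop :=
  IsLeast {r : ℝ | ∃ x : dualLattice Λ, Submodule.Quotient.mk x = c ∧ r = ‖(x : E n)‖ ^ 2} m

/-- The binary code `C ⊆ 𝔽₂⁷` spanned by `(1,0,1,1,1,0,0)`, `(0,1,0,1,1,1,0)`,
`(0,0,1,0,1,1,1)`. -/
def code7 : Submodule (ZMod 2) (Fin 7 → ZMod 2) :=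
  Submodule.span (ZMod 2)
    {![1, 0, 1, 1, 1, 0, 0], ![0, 1, 0, 1, 1, 1, 0], ![0, 0, 1, 0, 1, 1, 1]}

/-- The laminated lattice `Λ₇ = {x ∈ ℤ⁷ : x mod 2 ∈ C} ≅ √2·E₇`. -/
def Λ7 : Submodule ℤ (E 7) :=
  Submodule.span ℤ
    {v : E 7 | ∃ x : Fin 7 → ℤ, (fun i => (x i : ZMod 2)) ∈ code7 ∧ v = intVec x}

/-!
The lattice `Λ₇` is Construction A (unscaled) of a binary code `C`. For every such lattice `Λ`, the
dual `Λ♯` consists of the vectors `s̃/2 + y` with `s ∈ C⊥` and `y ∈ ℤⁿ`, so its cosets modulo `Λ`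
correspond to pairs `(s, t) ∈ C⊥ × 𝔽₂ⁿ/C`. Doubling maps `(s, t)` to `(0, s)`, hence the coset has
order 4 unless `s ∈ C`. In a shortest vector with `y ≡ u` modulo 2, a coordinate with `sᵢ = 1`
contributes `1/4` to the norm and one with `sᵢ = 0` contributes `uᵢ`; the minimal norm of the coset
is the least total over `u ∈ t + C`. For `Λ₇` the code `C⊥` is the `[7, 4]` Hamming code, and it
remains to tabulate order and minimal norm over `16 · 16` pairs.
-/

section ConstructionA

/-- Reduction `ℤⁿ → 𝔽₂ⁿ`. -/
def modTwo {n : ℕ} : (Fin n → ℤ) →+ (Fin n → ZMod 2) :=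
  (Int.castAddHom (ZMod 2)).compLeft (Fin n)

/-- The section of `modTwo` with values in `{0, 1}ⁿ`. -/
def liftBits {n : ℕ} (s : Fin n → ZMod 2) : Fin n → ℤ := fun i => (s i).val

/-- The lattice `{x ∈ ℤⁿ : x mod 2 ∈ C}` that Construction A, without rescaling, attaches to a
binary code `C`. -/
def constructionA {n : ℕ} (C : Submodule (ZMod 2) (Fin n → ZMod 2)) : Submodule ℤ (E n) where
  carrier := {v | ∃ x : Fin n → ℤ, modTwo x ∈ C ∧ v = intVec x}
  zero_mem' := ⟨0, by rw [map_zero]; exact C.zero_mem, by ext i; simp [intVec]⟩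
  add_mem' := by
    rintro _ _ ⟨x, hx, rfl⟩ ⟨y, hy, rfl⟩
    exact ⟨x + y, by rw [map_add]; exact C.add_mem hx hy, by ext i; simp [intVec]⟩
  smul_mem' := by
    rintro k _ ⟨x, hx, rfl⟩
    exact ⟨k • x, by rw [map_zsmul]; exact zsmul_mem hx k, by ext i; simp [intVec]⟩

/-- The dual `C⊥` of a linear code for the standard dot product. -/
def dualCode {ι R : Type*} [Fintype ι] [CommSemiring R] (C : Submodule R (ι → R)) :
    Submodule R (ι → R) :=
  C.orthogonalBilin (dotProductBilin R R)

/-- The half-integral vector `s̃/2 + y`, where `s̃ ∈ {0, 1}ⁿ` lifts `s`. -/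
def halfVec {n : ℕ} (s : Fin n → ZMod 2) (y : Fin n → ℤ) : E n :=
  vec fun i => ((s i).val : ℝ) / 2 + y i

variable {n : ℕ} {C : Submodule (ZMod 2) (Fin n → ZMod 2)}

lemma mem_dualCode_iff {ι R : Type*} [Fintype ι] [CommSemiring R] {D : Submodule R (ι → R)}
    {s : ι → R} : s ∈ dualCode D ↔ ∀ c ∈ D, c ⬝ᵥ s = 0 :=
  Iff.rfl

lemma modTwo_apply (x : Fin n → ℤ) (i : Fin n) : modTwo x i = (x i : ZMod 2) := rfl

lemma modTwo_liftBits (s : Fin n → ZMod 2) : modTwo (liftBits s) = s := by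
  ext i
  simp [modTwo_apply, liftBits]

lemma modTwo_two_nsmul (x : Fin n → ℤ) : modTwo (2 • x) = 0 := by
  rw [map_nsmul]
  exact funext fun i => CharTwo.two_nsmul _

lemma halfVec_apply (s : Fin n → ZMod 2) (y : Fin n → ℤ) (i : Fin n) :
    halfVec s y i = ((s i).val : ℝ) / 2 + y i := rfl

lemma inner_halfVec_intVec (s : Fin n → ZMod 2) (y x : Fin n → ℤ) :
    ⟪halfVec s y, intVec x⟫ = ((x ⬝ᵥ liftBits s : ℤ) : ℝ) / 2 + (x ⬝ᵥ y : ℤ) := by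
  simp only [PiLp.inner_apply, halfVec_apply, intVec, WithLp.equiv_symm_apply, dotProduct,
    liftBits, Int.cast_sum, Finset.sum_div, ← Finset.sum_add_distrib, RCLike.inner_apply]
  refine Finset.sum_congr rfl fun i _ => ?_
  push_cast
  simp only [conj_trivial]
  ring

lemma exists_intCast_eq_half_add_iff (a b : ℤ) :
    (∃ k : ℤ, (a : ℝ) / 2 + b = k) ↔ (a : ZMod 2) = 0 := by
  rw [ZMod.intCast_zmod_eq_zero_iff_dvd a 2]
  constructor
  · rintro ⟨k, hk⟩
    refine ⟨k - b, ?_⟩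
    have : (a : ℝ) = 2 * (k - b) := by linarith
    exact_mod_cast this
  · rintro ⟨m, rfl⟩
    exact ⟨m + b, by push_cast; ring⟩

lemma intCast_dotProduct (x y : Fin n → ℤ) :
    ((x ⬝ᵥ y : ℤ) : ZMod 2) = modTwo x ⬝ᵥ modTwo y := by
  simp [dotProduct, modTwo_apply]

theorem halfVec_mem_dualLattice_iff {s : Fin n → ZMod 2} {y : Fin n → ℤ} :
    halfVec s y ∈ dualLattice (constructionA C) ↔ s ∈ dualCode C := by
  have pairing (x : Fin n → ℤ) :
      (∃ k : ℤ, ⟪halfVec s y, intVec x⟫ = k) ↔ modTwo x ⬝ᵥ s = 0 := by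
    rw [inner_halfVec_intVec, exists_intCast_eq_half_add_iff, intCast_dotProduct, modTwo_liftBits]
  rw [mem_dualCode_iff]
  constructor
  · intro h c hc
    rw [← modTwo_liftBits c] at hc ⊢
    exact (pairing _).1 (h _ ⟨_, hc, rfl⟩)
  · rintro h _ ⟨x, hx, rfl⟩
    exact (pairing x).2 (h _ hx)

-- Twice each coordinate is the inner product with a vector of `2ℤⁿ`, which lies in the lattice.
theorem exists_eq_halfVec_of_mem_dualLattice {x : E n}
    (hx : x ∈ dualLattice (constructionA C)) : ∃ s y, x = halfVec s y := by
  have two_mul_apply (i : Fin n) : ∃ k : ℤ, 2 * x i = k := by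
    have hmem : intVec (2 • Pi.single i 1) ∈ constructionA C :=
      ⟨_, by rw [modTwo_two_nsmul]; exact C.zero_mem, rfl⟩
    obtain ⟨k, hk⟩ := hx _ hmem
    refine ⟨k, hk ▸ ?_⟩
    simp [PiLp.inner_apply, intVec, Pi.single_apply]
  choose k hk using two_mul_apply
  refine ⟨modTwo k, fun i => k i / 2, ?_⟩
  ext i
  have hdiv : ((modTwo k i).val : ℤ) + 2 * (k i / 2) = k i := by
    rw [modTwo_apply, ZMod.val_intCast]
    exact Int.emod_add_mul_ediv (k i) 2
  have hdiv' : ((modTwo k i).val : ℝ) + 2 * (k i / 2 : ℤ) = k i := by exact_mod_cast hdiv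
  rw [halfVec_apply]
  linarith [hk i]

theorem halfVec_sub_mem_constructionA_iff {s s' : Fin n → ZMod 2} {y y' : Fin n → ℤ} :
    halfVec s y - halfVec s' y' ∈ constructionA C ↔ s = s' ∧ modTwo y - modTwo y' ∈ C := by
  constructor
  · rintro ⟨x, hx, hsub⟩
    have coord (i : Fin n) : ((s i).val : ℤ) - (s' i).val = 2 * (x i - (y i - y' i)) := by
      have h : ((s i).val : ℝ) / 2 + y i - ((s' i).val / 2 + y' i) = x i :=
        congrArg (fun v : E n => v i) hsub
      have h' : ((s i).val : ℝ) - (s' i).val = 2 * (x i - (y i - y' i)) := by linarith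
      exact_mod_cast h'
    have hs : s = s' := by
      refine funext fun i => ZMod.val_injective 2 ?_
      have := ZMod.val_lt (s i)
      have := ZMod.val_lt (s' i)
      have := coord i
      omega
    have hxy : x = y - y' := by
      ext i
      have := coord i
      rw [hs] at this
      simp only [Pi.sub_apply]
      omega
    exact ⟨hs, by rwa [← map_sub, ← hxy]⟩
  · rintro ⟨rfl, hy⟩
    refine ⟨y - y', by rwa [map_sub], ?_⟩
    ext i
    simp [halfVec_apply, intVec]

variable (C) in
/-- The coset of `Λ♯/Λ`, for `Λ` the Construction A lattice of `C`, with coordinates `s ∈ C⊥` and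
`t ∈ 𝔽₂ⁿ`: it contains `s̃/2 + t̃`, and only the class of `t` modulo `C` matters. -/
def dualClass (s : dualCode C) (t : Fin n → ZMod 2) : DualQuot (constructionA C) :=
  Submodule.Quotient.mk ⟨halfVec s (liftBits t), halfVec_mem_dualLattice_iff.2 s.2⟩

theorem mk_halfVec_eq_dualClass_iff {s : Fin n → ZMod 2} {y : Fin n → ℤ} {s' : dualCode C}
    {t : Fin n → ZMod 2} (hs : halfVec s y ∈ dualLattice (constructionA C)) :
    Submodule.Quotient.mk ⟨halfVec s y, hs⟩ = dualClass C s' t ↔ s = s' ∧ modTwo y - t ∈ C := by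
  rw [dualClass, Submodule.Quotient.eq]
  change halfVec s y - halfVec s' (liftBits t) ∈ constructionA C ↔ _
  rw [halfVec_sub_mem_constructionA_iff, modTwo_liftBits]

theorem dualClass_eq_iff {s s' : dualCode C} {t t' : Fin n → ZMod 2} :
    dualClass C s t = dualClass C s' t' ↔ s = s' ∧ t - t' ∈ C := by
  rw [dualClass, mk_halfVec_eq_dualClass_iff, modTwo_liftBits, Subtype.ext_iff]

theorem exists_dualClass_eq (c : DualQuot (constructionA C)) : ∃ s t, dualClass C s t = c := by
  obtain ⟨⟨x, hx⟩, rfl⟩ := Submodule.Quotient.mk_surjective _ c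
  obtain ⟨s, y, rfl⟩ := exists_eq_halfVec_of_mem_dualLattice hx
  refine ⟨⟨s, halfVec_mem_dualLattice_iff.1 hx⟩, modTwo y, Eq.symm ?_⟩
  rw [mk_halfVec_eq_dualClass_iff, sub_self]
  exact ⟨rfl, C.zero_mem⟩

theorem dualClass_eq_zero_iff {s : dualCode C} {t : Fin n → ZMod 2} :
    dualClass C s t = 0 ↔ s = 0 ∧ t ∈ C := by
  have h : dualClass C 0 0 = 0 := by
    refine congrArg Submodule.Quotient.mk (Subtype.ext ?_)
    ext i
    simp [halfVec_apply, liftBits]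
  rw [← h, dualClass_eq_iff, sub_zero]

theorem two_nsmul_dualClass (s : dualCode C) (t : Fin n → ZMod 2) :
    2 • dualClass C s t = dualClass C 0 s := by
  have hdouble : (2 • halfVec s (liftBits t) : E n) = halfVec 0 (liftBits s + 2 • liftBits t) := by
    ext i
    simp only [two_nsmul, PiLp.add_apply, halfVec_apply, liftBits, Pi.add_apply, Pi.zero_apply,
      ZMod.val_zero]
    push_cast
    ring
  have hmem : halfVec 0 (liftBits s + 2 • liftBits t) ∈ dualLattice (constructionA C) :=
    halfVec_mem_dualLattice_iff.2 (zero_mem _)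
  have hmk : 2 • dualClass C s t = Submodule.Quotient.mk ⟨_, hmem⟩ :=
    congrArg Submodule.Quotient.mk (Subtype.ext hdouble)
  rw [hmk]
  refine (mk_halfVec_eq_dualClass_iff hmem).2 ⟨rfl, ?_⟩
  rw [map_add, modTwo_liftBits, add_sub_cancel_left, modTwo_two_nsmul]
  exact C.zero_mem

theorem addOrderOf_dualClass [DecidablePred (· ∈ C)] (s : dualCode C) (t : Fin n → ZMod 2) :
    addOrderOf (dualClass C s t) =
      if (s : Fin n → ZMod 2) ∈ C then
        if (s : Fin n → ZMod 2) = 0 ∧ t ∈ C then 1 else 2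
      else 4 := by
  have htwo : 2 • dualClass C s t = 0 ↔ (s : Fin n → ZMod 2) ∈ C := by
    rw [two_nsmul_dualClass, dualClass_eq_zero_iff, and_iff_right rfl]
  have hone : dualClass C s t = 0 ↔ (s : Fin n → ZMod 2) = 0 ∧ t ∈ C := by
    rw [dualClass_eq_zero_iff, Subtype.ext_iff, ZeroMemClass.coe_zero]
  split_ifs with hs hst
  · rw [hone.2 hst, addOrderOf_zero]
  · exact addOrderOf_eq_prime (htwo.2 hs) (hone.not.2 hst)
  · refine addOrderOf_eq_prime_pow (p := 2) (n := 1) (by rwa [pow_one, htwo]) ?_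
    rw [pow_succ, pow_one, mul_nsmul, two_nsmul_dualClass, two_nsmul_dualClass,
      dualClass_eq_zero_iff]
    exact ⟨rfl, C.zero_mem⟩

/-- The minimum of `(ã + 2k)²` over the integers `k` congruent to `b` modulo 2, where
`ã ∈ {0, 1}` lifts `a`. -/
def coordWeight (a b : ZMod 2) : ℕ := if a = 0 then if b = 0 then 0 else 4 else 1

/-- Four times the minimum of `‖s̃/2 + y‖²` over the integral vectors `y` that reduce to `u`
modulo 2. -/
def glueWeight (s u : Fin n → ZMod 2) : ℕ := ∑ i, coordWeight (s i) (u i)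

lemma isLeast_coordWeight (a b : ZMod 2) :
    IsLeast {r : ℤ | ∃ k : ℤ, (k : ZMod 2) = b ∧ r = (a.val + 2 * k) ^ 2} (coordWeight a b) := by
  constructor
  · refine ⟨if a = 0 then b.val else -b.val, ?_⟩
    revert a b
    decide
  · rintro _ ⟨k, rfl, rfl⟩
    obtain rfl | rfl : a = 0 ∨ a = 1 := by revert a; decide
    · rw [ZMod.val_zero, Nat.cast_zero, zero_add]
      by_cases hk : (k : ZMod 2) = 0
      · simpa only [coordWeight, hk, if_true, Nat.cast_zero] using sq_nonneg (2 * k)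
      · have hk0 : k ≠ 0 := fun h => hk (by rw [h, Int.cast_zero])
        have := pow_two_pos_of_ne_zero hk0
        simp only [coordWeight, hk, if_true, if_false]
        push_cast
        linarith
    · have hodd : 1 + 2 * k ≠ 0 := by omega
      exact pow_two_pos_of_ne_zero hodd

theorem isLeast_glueWeight (s u : Fin n → ZMod 2) :
    IsLeast {r : ℝ | ∃ y, modTwo y = u ∧ r = ‖halfVec s y‖ ^ 2} (glueWeight s u / 4 : ℝ) := by
  have norm_sq (y : Fin n → ℤ) :
      ‖halfVec s y‖ ^ 2 = ((∑ i, ((s i).val + 2 * y i) ^ 2 : ℤ) : ℝ) / 4 := by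
    rw [EuclideanSpace.norm_sq_eq]
    push_cast
    rw [Finset.sum_div]
    refine Finset.sum_congr rfl fun i _ => ?_
    rw [Real.norm_eq_abs, sq_abs, halfVec_apply]
    ring
  constructor
  · choose y hy hweight using fun i => (isLeast_coordWeight (s i) (u i)).1
    refine ⟨y, funext hy, ?_⟩
    rw [norm_sq, ← Finset.sum_congr rfl fun i _ => hweight i, glueWeight]
    push_cast
    rfl
  · rintro _ ⟨y, rfl, rfl⟩
    have hle : (glueWeight s (modTwo y) : ℤ) ≤ ∑ i, ((s i).val + 2 * y i) ^ 2 := by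
      rw [glueWeight, Nat.cast_sum]
      exact Finset.sum_le_sum fun i _ => (isLeast_coordWeight (s i) _).2 ⟨y i, rfl, rfl⟩
    rw [norm_sq]
    gcongr
    exact_mod_cast hle

theorem cosetMinNorm_dualClass {s : dualCode C} {t : Fin n → ZMod 2} {m : ℕ}
    (hm : IsLeast ((fun c => glueWeight s (t + c)) '' C) m) :
    CosetMinNorm (constructionA C) (dualClass C s t) (m / 4) := by
  constructor
  · obtain ⟨c, hc, rfl⟩ := hm.1
    obtain ⟨y, hy, hweight⟩ := (isLeast_glueWeight s (t + c)).1
    refine ⟨⟨halfVec s y, halfVec_mem_dualLattice_iff.2 s.2⟩, ?_, hweight⟩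
    rw [mk_halfVec_eq_dualClass_iff, hy, add_sub_cancel_left]
    exact ⟨rfl, hc⟩
  · rintro _ ⟨⟨x, hx⟩, hmk, rfl⟩
    obtain ⟨s', y, rfl⟩ := exists_eq_halfVec_of_mem_dualLattice hx
    obtain ⟨rfl, hy⟩ := (mk_halfVec_eq_dualClass_iff hx).1 hmk
    have hle : m ≤ glueWeight s (modTwo y) := by
      simpa only [add_sub_cancel] using hm.2 (Set.mem_image_of_mem _ hy)
    have hnorm : (glueWeight s (modTwo y) / 4 : ℝ) ≤ ‖halfVec s y‖ ^ 2 :=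
      (isLeast_glueWeight (s : Fin n → ZMod 2) (modTwo y)).2 ⟨y, rfl, rfl⟩
    exact le_trans (by gcongr) hnorm

end ConstructionA

section Code7

theorem Λ7_eq_constructionA : Λ7 = constructionA code7 :=
  Submodule.span_eq (constructionA code7)

/-- The word of `code7` with coefficients `a` on the three generators. -/
def codeword7 (a : Fin 3 → ZMod 2) : Fin 7 → ZMod 2 :=
  ![a 0, a 1, a 0 + a 2, a 0 + a 1, a 0 + a 1 + a 2, a 1 + a 2, a 2]

/-- The word of the `[7, 4]` Hamming code `code7⊥` with information bits `b` in positions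
`2, 3, 4, 5`. -/
def dualWord7 (b : Fin 4 → ZMod 2) : Fin 7 → ZMod 2 :=
  ![b 0 + b 1 + b 2, b 1 + b 2 + b 3, b 0, b 1, b 2, b 3, b 0 + b 2 + b 3]

/-- The word supported in positions `2, 3, 4, 5` with entries `v` there. Since positions `0, 1, 6`
are information positions of `code7`, these words form a transversal of `𝔽₂⁷/code7`. -/
def cosetRep7 (v : Fin 4 → ZMod 2) : Fin 7 → ZMod 2 := ![0, 0, v 0, v 1, v 2, v 3, 0]

lemma mem_code7_iff {c : Fin 7 → ZMod 2} : c ∈ code7 ↔ ∃ a, codeword7 a = c := by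
  have hcomb (a : Fin 3 → ZMod 2) : codeword7 a = a 0 • ![1, 0, 1, 1, 1, 0, 0] +
      a 1 • ![0, 1, 0, 1, 1, 1, 0] + a 2 • ![0, 0, 1, 0, 1, 1, 1] := by
    ext i
    fin_cases i <;> simp [codeword7]
  rw [code7, Submodule.mem_span_triple]
  constructor
  · rintro ⟨x, y, z, rfl⟩
    exact ⟨![x, y, z], hcomb _⟩
  · rintro ⟨a, rfl⟩
    exact ⟨a 0, a 1, a 2, (hcomb a).symm⟩

instance : DecidablePred (· ∈ code7) := fun _ => decidable_of_iff _ mem_code7_iff.symm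

lemma mem_dualCode_code7_iff {s : Fin 7 → ZMod 2} :
    s ∈ dualCode code7 ↔ ∃ b, dualWord7 b = s := by
  simp only [mem_dualCode_iff, mem_code7_iff, forall_exists_index, forall_apply_eq_imp_iff]
  constructor
  · intro h
    have h₀ : s 0 + s 2 + s 3 + s 4 = 0 := by
      simpa [codeword7, dotProduct, Fin.sum_univ_seven] using h ![1, 0, 0]
    have h₁ : s 1 + s 3 + s 4 + s 5 = 0 := by
      simpa [codeword7, dotProduct, Fin.sum_univ_seven] using h ![0, 1, 0]
    have h₂ : s 2 + s 4 + s 5 + s 6 = 0 := by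
      simpa [codeword7, dotProduct, Fin.sum_univ_seven] using h ![0, 0, 1]
    refine ⟨![s 2, s 3, s 4, s 5], ?_⟩
    ext i
    fin_cases i <;> simp only [dualWord7, Fin.reduceFinMk, Fin.isValue, Matrix.cons_val] <;> grind
  · rintro ⟨b, rfl⟩ a
    simp only [dotProduct, Fin.sum_univ_seven, codeword7, dualWord7, Matrix.cons_val]
    grind

lemma injective_dualWord7 : Function.Injective dualWord7 := by
  intro b b' h
  ext i
  fin_cases i
  · exact congrFun h 2
  · exact congrFun h 3
  · exact congrFun h 4
  · exact congrFun h 5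

lemma exists_cosetRep7_sub_mem (t : Fin 7 → ZMod 2) : ∃ v, cosetRep7 v - t ∈ code7 := by
  refine ⟨![t 0 + t 2 + t 6, t 0 + t 1 + t 3, t 0 + t 1 + t 4 + t 6, t 1 + t 5 + t 6],
    mem_code7_iff.2 ⟨![t 0, t 1, t 6], ?_⟩⟩
  ext i
  fin_cases i <;>
    simp only [codeword7, cosetRep7, Pi.sub_apply, Fin.reduceFinMk, Fin.isValue,
      Matrix.cons_val] <;>
    grind

lemma cosetRep7_sub_mem_code7_iff {v v' : Fin 4 → ZMod 2} :
    cosetRep7 v - cosetRep7 v' ∈ code7 ↔ v = v' := by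
  refine ⟨fun h => ?_, fun h => by rw [h, sub_self]; exact code7.zero_mem⟩
  obtain ⟨a, ha⟩ := mem_code7_iff.1 h
  have h₀ : a 0 = 0 := congrFun ha 0
  have h₁ : a 1 = 0 := congrFun ha 1
  have h₂ : a 2 = 0 := congrFun ha 6
  have hzero : codeword7 a = 0 := by
    ext i
    fin_cases i <;> simp [codeword7, h₀, h₁, h₂]
  have heq : cosetRep7 v = cosetRep7 v' := sub_eq_zero.1 (ha.symm.trans hzero)
  ext i
  fin_cases i
  · exact congrFun heq 2
  · exact congrFun heq 3
  · exact congrFun heq 4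
  · exact congrFun heq 5

/-- Coordinates on `Λ7♯/Λ7`: the information bits of the Hamming codeword `s` and those of the
representative of `t` modulo `code7`. -/
abbrev ClassLabel7 := (Fin 4 → ZMod 2) × (Fin 4 → ZMod 2)

/-- The coset in `Λ7♯/Λ7` with a given label. -/
def dualClass7 (l : ClassLabel7) : DualQuot (constructionA code7) :=
  dualClass code7 ⟨dualWord7 l.1, mem_dualCode_code7_iff.2 ⟨l.1, rfl⟩⟩ (cosetRep7 l.2)

/-- Four times the minimal norm of the coset `dualClass7 l`. -/
def minWeight7 (l : ClassLabel7) : ℕ :=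
  Finset.univ.inf' Finset.univ_nonempty fun a : Fin 3 → ZMod 2 =>
    glueWeight (dualWord7 l.1) (cosetRep7 l.2 + codeword7 a)

/-- The order of the coset `dualClass7 l`. -/
def order7 (l : ClassLabel7) : ℕ :=
  if dualWord7 l.1 ∈ code7 then if dualWord7 l.1 = 0 ∧ cosetRep7 l.2 ∈ code7 then 1 else 2 else 4

theorem bijective_dualClass7 : Function.Bijective dualClass7 := by
  constructor
  · rintro ⟨b, v⟩ ⟨b', v'⟩ h
    obtain ⟨hs, hv⟩ := dualClass_eq_iff.1 h
    exact Prod.ext (injective_dualWord7 (congrArg Subtype.val hs))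
      (cosetRep7_sub_mem_code7_iff.1 hv)
  · intro c
    obtain ⟨⟨s, hs⟩, t, rfl⟩ := exists_dualClass_eq c
    obtain ⟨b, rfl⟩ := mem_dualCode_code7_iff.1 hs
    obtain ⟨v, hv⟩ := exists_cosetRep7_sub_mem t
    exact ⟨(b, v), dualClass_eq_iff.2 ⟨rfl, hv⟩⟩

lemma isLeast_minWeight7 (l : ClassLabel7) :
    IsLeast ((fun c => glueWeight (dualWord7 l.1) (cosetRep7 l.2 + c)) '' code7)
      (minWeight7 l) := by
  constructor
  · obtain ⟨a, -, ha⟩ := Finset.exists_mem_eq_inf' Finset.univ_nonempty fun a : Fin 3 → ZMod 2 =>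
      glueWeight (dualWord7 l.1) (cosetRep7 l.2 + codeword7 a)
    exact ⟨codeword7 a, mem_code7_iff.2 ⟨a, rfl⟩, ha.symm⟩
  · rintro _ ⟨c, hc, rfl⟩
    obtain ⟨a, rfl⟩ := mem_code7_iff.1 hc
    exact Finset.inf'_le _ (Finset.mem_univ a)

theorem cosetMinNorm_dualClass7_iff {l : ClassLabel7} {r : ℝ} :
    CosetMinNorm (constructionA code7) (dualClass7 l) r ↔ (minWeight7 l : ℝ) = 4 * r := by
  have hmin : CosetMinNorm (constructionA code7) (dualClass7 l) (minWeight7 l / 4) :=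
    cosetMinNorm_dualClass (isLeast_minWeight7 l)
  constructor
  · intro h
    linarith [h.unique hmin]
  · intro h
    rwa [h, mul_div_cancel_left₀ r four_ne_zero] at hmin

theorem addOrderOf_dualClass7 (l : ClassLabel7) : addOrderOf (dualClass7 l) = order7 l :=
  addOrderOf_dualClass _ _

open Multiset in
theorem map_minWeight7_order7_univ :
    (Finset.univ.val.map fun l => (minWeight7 l, order7 l)) =
      replicate 1 (0, 1) + replicate 56 (3, 4) + replicate 63 (4, 2) + replicate 72 (7, 4) +
        replicate 63 (8, 2) + replicate 1 (12, 2) := by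
  decide +kernel

theorem minWeight7_order7_cases (l : ClassLabel7) :
    (minWeight7 l = 0 ∧ order7 l = 1) ∨ (minWeight7 l = 3 ∧ order7 l = 4) ∨
      (minWeight7 l = 4 ∧ order7 l = 2) ∨ (minWeight7 l = 7 ∧ order7 l = 4) ∨
      (minWeight7 l = 8 ∧ order7 l = 2) ∨ (minWeight7 l = 12 ∧ order7 l = 2) := by
  have h := Multiset.mem_map_of_mem (fun l => (minWeight7 l, order7 l)) (Finset.mem_univ_val l)
  simpa only [map_minWeight7_order7_univ, Multiset.mem_add, Multiset.mem_replicate, ne_eq,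
    OfNat.ofNat_ne_zero, one_ne_zero, not_false_eq_true, true_and, or_assoc, Prod.mk_inj] using h

theorem ncard_setOf_cosetMinNorm_addOrderOf {r : ℝ} {m o N : ℕ} (hr : (m : ℝ) = 4 * r)
    (hN : (Finset.univ.val.map fun l => (minWeight7 l, order7 l)).count (m, o) = N) :
    {c | CosetMinNorm (constructionA code7) c r ∧ addOrderOf c = o}.ncard = N := by
  have hpre : dualClass7 ⁻¹' {c | CosetMinNorm (constructionA code7) c r ∧ addOrderOf c = o} =
      Finset.univ.filter fun l => (m, o) = (minWeight7 l, order7 l) := by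
    ext l
    rw [Set.mem_preimage, Set.mem_ofPred_eq, Finset.mem_coe, Finset.mem_filter_univ,
      cosetMinNorm_dualClass7_iff, addOrderOf_dualClass7, ← hr, Nat.cast_inj, Prod.mk_inj,
      eq_comm, eq_comm (a := o)]
  rw [← Set.ncard_preimage_of_injective_subset_range bijective_dualClass7.injective
      (by simp only [bijective_dualClass7.surjective.range_eq, Set.subset_univ]),
    hpre, Set.ncard_coe_finset, ← hN, Multiset.count_map]
  rfl

end Code7

/-- The quotient `Λ₇♯/Λ₇` has exactly 256 elements: the zero coset, 56 cosets of minimal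
norm 3/4 and order 4, 63 cosets of minimal norm 1 and order 2, 72 cosets of minimal
norm 7/4 and order 4, 63 cosets of minimal norm 2 and order 2, and 1 coset of minimal
norm 3 and order 2. -/
theorem Λ7_dual_quotient_classes :
    Nat.card (DualQuot Λ7) = 256 ∧
    (∀ c : DualQuot Λ7, c = 0 ∨
      (CosetMinNorm Λ7 c (3/4) ∧ addOrderOf c = 4) ∨
      (CosetMinNorm Λ7 c 1 ∧ addOrderOf c = 2) ∨
      (CosetMinNorm Λ7 c (7/4) ∧ addOrderOf c = 4) ∨
      (CosetMinNorm Λ7 c 2 ∧ addOrderOf c = 2) ∨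
      (CosetMinNorm Λ7 c 3 ∧ addOrderOf c = 2)) ∧
    {c : DualQuot Λ7 | CosetMinNorm Λ7 c (3/4) ∧ addOrderOf c = 4}.ncard = 56 ∧
    {c : DualQuot Λ7 | CosetMinNorm Λ7 c 1 ∧ addOrderOf c = 2}.ncard = 63 ∧
    {c : DualQuot Λ7 | CosetMinNorm Λ7 c (7/4) ∧ addOrderOf c = 4}.ncard = 72 ∧
    {c : DualQuot Λ7 | CosetMinNorm Λ7 c 2 ∧ addOrderOf c = 2}.ncard = 63 ∧
    {c : DualQuot Λ7 | CosetMinNorm Λ7 c 3 ∧ addOrderOf c = 2}.ncard = 1 := by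
  rw [Λ7_eq_constructionA]
  refine ⟨?_, fun c => ?_, ?_⟩
  · rw [← Nat.card_eq_of_bijective _ bijective_dualClass7]
    simp
  · obtain ⟨l, rfl⟩ := bijective_dualClass7.surjective c
    rw [← AddMonoid.addOrderOf_eq_one_iff]
    simp only [cosetMinNorm_dualClass7_iff, addOrderOf_dualClass7]
    rcases minWeight7_order7_cases l with h | h | h | h | h | h <;> norm_num [h]
  · refine ⟨ncard_setOf_cosetMinNorm_addOrderOf (m := 3) (by norm_num) ?_,
      ncard_setOf_cosetMinNorm_addOrderOf (m := 4) (by norm_num) ?_,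
      ncard_setOf_cosetMinNorm_addOrderOf (m := 7) (by norm_num) ?_,
      ncard_setOf_cosetMinNorm_addOrderOf (m := 8) (by norm_num) ?_,
      ncard_setOf_cosetMinNorm_addOrderOf (m := 12) (by norm_num) ?_⟩ <;>
    simp only [map_minWeight7_order7_univ, Multiset.count_add, Multiset.count_replicate] <;> rfl
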